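/- Let f : [0,1] → [0,1] be continuous, strictly increasing on [0,1/2] and strictly decreasing on [1/2,1], with f(0)=f(1)=0. Suppose x₁, …, x_m ∈ [0,1] form a cycle of odd length m > 1 under f (i.e., f(x_i) = x_{i+1 mod m} and the points are pairwise distinct). Then there exists some i with x_i < 1/2 and f(x_i) ≥ 1/2. -/

import Mathlib

/-- A translation of `ZMod m` preserving the strict order pulled back along an injective
real-valued map is trivial. -/
theorem ZMod.eq_zero_of_translation_strictMono {m : ℕ} (hm : 0 < m) {g : ZMod m → ℝ}
    (hg : Function.Injective g) {c : ZMod m}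
    (hmono : ∀ i j, g i < g j → g (i + c) < g (j + c)) : c = 0 := by
  have hend : g ((m : ZMod m) * c) = g (((0 : ℕ) : ZMod m) * c) := by simp
  rcases lt_trichotomy (g 0) (g c) with h | h | h
  · have hs : StrictMono fun k : ℕ => g ((k : ZMod m) * c) := by
      refine strictMono_nat_of_lt_succ fun k => ?_
      induction k with
      | zero => simpa using h
      | succ k ih =>
        have := hmono _ _ ih
        push_cast at this ⊢
        simpa only [add_mul, one_mul] using this
    exact absurd hend (hs hm).ne'
  · exact (hg h).symm
  · have hs : StrictAnti fun k : ℕ => g ((k : ZMod m) * c) := by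
      refine strictAnti_nat_of_succ_lt fun k => ?_
      induction k with
      | zero => simpa using h
      | succ k ih =>
        have := hmono _ _ ih
        push_cast at this ⊢
        simpa only [add_mul, one_mul] using this
    exact absurd hend (hs hm).ne

theorem stmt_2 (f : ℝ → ℝ)
    (hmap : Set.MapsTo f (Set.Icc (0:ℝ) 1) (Set.Icc (0:ℝ) 1))
    (hcont : ContinuousOn f (Set.Icc (0:ℝ) 1))
    (hinc : StrictMonoOn f (Set.Icc (0:ℝ) (1/2)))
    (hdec : StrictAntiOn f (Set.Icc (1/2:ℝ) 1))
    (h0 : f 0 = 0) (h1 : f 1 = 0)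
    (m : ℕ) (hodd : Odd m) (hm : 1 < m)
    (x : ZMod m → ℝ) (hx : ∀ i, x i ∈ Set.Icc (0:ℝ) 1)
    (hinj : Function.Injective x)
    (hcyc : ∀ i, f (x i) = x (i + 1)) :
    ∃ i, x i < 1/2 ∧ 1/2 ≤ f (x i) := by
  by_contra! hcon
  have : NeZero m := ⟨by omega⟩
  have hpos : 0 < m := by omega
  by_cases hleft : ∃ i, x i < 1/2
  · obtain ⟨i, hi⟩ := hleft
    have hiter : ∀ k : ℕ, x (i + k) < 1/2 := by
      intro k
      induction k with
      | zero => simpa using hi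
      | succ k ih =>
        have := hcon _ ih
        rw [hcyc] at this
        simpa [add_assoc] using this
    have hall : ∀ j, x j < 1/2 := by
      intro j
      have := hiter (j - i).val
      rwa [ZMod.natCast_zmod_val, add_sub_cancel] at this
    have hone : (1 : ZMod m) = 0 := by
      refine ZMod.eq_zero_of_translation_strictMono hpos hinj fun j k hjk => ?_
      rw [← hcyc, ← hcyc]
      exact hinc ⟨(hx j).1, (hall j).le⟩ ⟨(hx k).1, (hall k).le⟩ hjk
    have hdvd : m ∣ 1 := (ZMod.natCast_eq_zero_iff 1 m).1 (by simpa using hone)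
    have := Nat.le_of_dvd one_pos hdvd
    omega
  · push Not at hleft
    have hanti : ∀ j k, x j < x k → x (k + 1) < x (j + 1) := by
      intro j k hjk
      rw [← hcyc, ← hcyc]
      exact hdec ⟨hleft j, (hx j).2⟩ ⟨hleft k, (hx k).2⟩ hjk
    have htwo : (1 + 1 : ZMod m) = 0 := by
      refine ZMod.eq_zero_of_translation_strictMono hpos hinj fun j k hjk => ?_
      rw [← add_assoc, ← add_assoc]
      exact hanti _ _ (hanti _ _ hjk)
    have hdvd : m ∣ 2 := (ZMod.natCast_eq_zero_iff 2 m).1 (by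
      rw [← htwo]; norm_num)
    have := Nat.le_of_dvd two_pos hdvd
    obtain ⟨r, hr⟩ := hodd
    omega
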